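/- Let M be a properly infinite σ-finite von Neumann algebra with a faithful normal semifinite trace τ, and let α ∈ M^n (n ≥ 1) be a commuting self-adjoint n-tuple such that the only finite projection of M belonging to WZ*(α) is 0. Given any sequence (p_k)_{k≥0} of τ-finite projections in M and any sequence (ε_k)_{k≥0} of positive real numbers, there exists a sequence (w_k)_{k≥0} of partial isometries in M such that w_l* w_k = δ_{l,k} p_k for all l, k ≥ 0 and ‖[w_k, α]‖ ≤ ε_k + ‖[p_k, α]‖ for all k ≥ 0. -/

import Mathlib

open ContinuousLinearMap Filter Topology

noncomputable section

namespace VNA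

variable {H : Type*} [NormedAddCommGroup H] [InnerProductSpace ℂ H] [CompleteSpace H]

/-- A projection (orthogonal projection): idempotent and self-adjoint. -/
def IsProjection (p : H →L[ℂ] H) : Prop := p * p = p ∧ star p = p

/-- Murray–von Neumann equivalence of `p` and `q` relative to `M`. -/
def MvNE (M : VonNeumannAlgebra H) (p q : H →L[ℂ] H) : Prop :=
  ∃ v ∈ M, star v * v = p ∧ v * star v = q

/-- `p` is a finite projection of `M`; for projections, `q ≤ p` is the range
containment `p * q = q`. -/
def IsFiniteProjection (M : VonNeumannAlgebra H) (p : H →L[ℂ] H) : Prop :=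
  p ∈ M ∧ IsProjection p ∧
    ∀ q, q ∈ M → IsProjection q → p * q = q → MvNE M q p → q = p

def IsInfiniteProjection (M : VonNeumannAlgebra H) (p : H →L[ℂ] H) : Prop :=
  p ∈ M ∧ IsProjection p ∧ ¬ IsFiniteProjection M p

/-- The centre `Z(M) = M ∩ M'` as a set. -/
def centerSet (M : VonNeumannAlgebra H) : Set (H →L[ℂ] H) :=
  {z | z ∈ M ∧ ∀ y ∈ M, z * y = y * z}

def IsCentralProjection (M : VonNeumannAlgebra H) (z : H →L[ℂ] H) : Prop :=
  IsProjection z ∧ z ∈ centerSet M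

def IsProperlyInfiniteProjection (M : VonNeumannAlgebra H) (p : H →L[ℂ] H) : Prop :=
  p ∈ M ∧ IsProjection p ∧
    ∀ z, IsCentralProjection M z → z * p ≠ 0 → IsInfiniteProjection M (z * p)

def ProperlyInfinite (M : VonNeumannAlgebra H) : Prop :=
  IsProperlyInfiniteProjection M 1

/-- `M` is σ-finite: every family of pairwise orthogonal nonzero projections in `M`
is countable. -/
def SigmaFinite (M : VonNeumannAlgebra H) : Prop :=
  ∀ S : Set (H →L[ℂ] H), (∀ p ∈ S, p ∈ M ∧ IsProjection p ∧ p ≠ 0) →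
    (∀ p ∈ S, ∀ q ∈ S, p ≠ q → p * q = 0) → S.Countable

/-- A faithful normal semifinite trace on `M`. -/
structure IsFNSTrace (M : VonNeumannAlgebra H) (τ : (H →L[ℂ] H) → ENNReal) : Prop where
  map_zero : τ 0 = 0
  additive : ∀ x y : H →L[ℂ] H, x ∈ M → y ∈ M → 0 ≤ x → 0 ≤ y → τ (x + y) = τ x + τ y
  homogeneous : ∀ (c : ℝ) (x : H →L[ℂ] H), 0 ≤ c → x ∈ M → 0 ≤ x →
    τ (c • x) = ENNReal.ofReal c * τ x
  tracial : ∀ x : H →L[ℂ] H, x ∈ M → τ (star x * x) = τ (x * star x)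
  faithful : ∀ x : H →L[ℂ] H, x ∈ M → 0 ≤ x → τ x = 0 → x = 0
  normal : ∀ (ι : Type*) [Preorder ι] [IsDirected ι (· ≤ ·)] [Nonempty ι]
      (f : ι → (H →L[ℂ] H)) (x : H →L[ℂ] H),
      (∀ i, f i ∈ M) → (∀ i, 0 ≤ f i) → Monotone f → (∃ C : ℝ, ∀ i, ‖f i‖ ≤ C) →
      x ∈ M → IsLUB (Set.range f) x → τ x = ⨆ i, τ (f i)
  semifinite : ∀ x : H →L[ℂ] H, x ∈ M → 0 ≤ x → x ≠ 0 →
      ∃ y, y ∈ M ∧ 0 ≤ y ∧ y ≤ x ∧ y ≠ 0 ∧ τ y < ⊤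

/-- `p` is a `τ`-finite projection of `M`. -/
def IsTauFiniteProjection (M : VonNeumannAlgebra H) (τ : (H →L[ℂ] H) → ENNReal)
    (p : H →L[ℂ] H) : Prop :=
  p ∈ M ∧ IsProjection p ∧ τ p < ⊤

/-- `F₁⁺(M) = {x ∈ M : 0 ≤ x ≤ 1, px = x for some τ-finite projection p}`. -/
def F1plus (M : VonNeumannAlgebra H) (τ : (H →L[ℂ] H) → ENNReal) : Set (H →L[ℂ] H) :=
  {x | x ∈ M ∧ 0 ≤ x ∧ x ≤ 1 ∧ ∃ p, IsTauFiniteProjection M τ p ∧ p * x = x}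

/-- `K(M,τ)`: operator-norm closure of the τ-finitely supported elements of `M`. -/
def Kideal (M : VonNeumannAlgebra H) (τ : (H →L[ℂ] H) → ENNReal) : Set (H →L[ℂ] H) :=
  closure {x | x ∈ M ∧ ∃ p, IsTauFiniteProjection M τ p ∧ p * x = x}

/-- A commuting self-adjoint `n`-tuple in `M`. -/
def IsCommutingSelfAdjointTuple (M : VonNeumannAlgebra H) {n : ℕ}
    (α : Fin n → (H →L[ℂ] H)) : Prop :=
  (∀ j, α j ∈ M) ∧ (∀ j, star (α j) = α j) ∧ ∀ i j, α i * α j = α j * α i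

/-- `‖[r,α]‖ = max_{1≤j≤n} ‖[r, α(j)]‖`. -/
def commNorm {n : ℕ} (α : Fin n → (H →L[ℂ] H)) (r : H →L[ℂ] H) : ℝ :=
  ⨆ j, ‖r * α j - α j * r‖

/-- `WZ*(S)`: the double commutant in `B(H)` of `S ∪ Z(M)`. -/
def WZstar (M : VonNeumannAlgebra H) (S : Set (H →L[ℂ] H)) : Set (H →L[ℂ] H) :=
  Set.centralizer (Set.centralizer (S ∪ centerSet M))

/-- A diagonal operator of `M`: `d = Σ_k λ_k p_k` with pairwise orthogonal
projections `p_k ∈ M`, the series converging in the strong operator topology. -/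
def IsDiagonal (M : VonNeumannAlgebra H) (d : H →L[ℂ] H) : Prop :=
  ∃ (p : ℕ → H →L[ℂ] H) (lam : ℕ → ℂ),
    (∀ k, p k ∈ M) ∧ (∀ k, IsProjection (p k)) ∧
    (∀ k l, k ≠ l → p k * p l = 0) ∧
    ∀ ξ : H, HasSum (fun k => lam k • (p k ξ)) (d ξ)

end VNA

/-!
Let `W = WZ*(α)`, an abelian von Neumann algebra that contains the centre and the spectral
projections of the `α j`. If `e ∈ W` is a projection and `z` is a central projection with `z * e`
nonzero, then `z * e ∈ W` is not τ-finite, so the comparison theorem moves any τ-finite projection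
under `e` to an equivalent one that is still under `e` and orthogonal to a prescribed τ-finite
projection `q`.

Cut `1` into finitely many spectral projections on each of which every `α j` is within `ε / 2` of a
scalar. A partial isometry in the corner of one piece commutes with `α` up to `ε`, and so does the
block diagonal sum `v` of such partial isometries over all pieces. If on each piece `e` it moves the
left support of `e * p k` off `q`, then `w k = v * p k` is isometric on the range of `p k`, has
range orthogonal to `q`, and satisfies the bound by the Leibniz rule. Taking for `q` the sum of the
final projections of `w 0, …, w (k - 1)` gives the sequence by recursion.
-/

namespace VNA

section PartialIsometry

variable {A ι : Type*}

/-- `v` is a partial isometry when its initial projection `star v * v` is a projection. -/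
def IsPartialIsometry [Mul A] [Star A] (v : A) : Prop :=
  IsStarProjection (star v * v)

/-- A family of partial isometries with pairwise orthogonal initial projections and pairwise
orthogonal final projections, so that its sums are again partial isometries. -/
structure IsOrthogonalFamily [NonUnitalNonAssocSemiring A] [Star A] (u : ι → A) : Prop where
  isPartialIsometry : ∀ i, IsPartialIsometry (u i)
  mul_star_eq_zero : Pairwise fun i j => u i * star (u j) = 0
  star_mul_eq_zero : Pairwise fun i j => star (u i) * u j = 0

namespace IsOrthogonalFamily

variable [Ring A] [StarRing A] {u : ι → A}

theorem star_sum_mul_sum (hu : IsOrthogonalFamily u) (s : Finset ι) :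
    star (∑ i ∈ s, u i) * ∑ i ∈ s, u i = ∑ i ∈ s, star (u i) * u i := by
  simp only [star_sum, Finset.sum_mul_sum]
  exact Finset.sum_congr rfl fun i hi => Finset.sum_eq_single i
    (fun j _ hj => hu.star_mul_eq_zero hj.symm) fun h => absurd hi h

theorem orthogonalIdempotents (hu : IsOrthogonalFamily u) :
    OrthogonalIdempotents fun i => star (u i) * u i where
  idem i := (hu.isPartialIsometry i).isIdempotentElem
  ortho i j hij := by
    simp only [mul_assoc, ← mul_assoc (u i), hu.mul_star_eq_zero hij, zero_mul, mul_zero]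

theorem isPartialIsometry_sum (hu : IsOrthogonalFamily u) (s : Finset ι) :
    IsPartialIsometry (∑ i ∈ s, u i) := by
  refine isStarProjection_iff'.2 ⟨?_, by simp only [star_mul, star_star]⟩
  rw [hu.star_sum_mul_sum]
  exact hu.orthogonalIdempotents.isIdempotentElem_sum

theorem exists_maximal {U : Set A} (hU : ∀ u ∈ U, IsPartialIsometry u) :
    ∃ S ⊆ U, IsOrthogonalFamily (Subtype.val : S → A) ∧
      ∀ u ∈ U, (∀ s ∈ S, u * star s = 0 ∧ star u * s = 0) → u ∈ S := by
  -- For a symmetric relation, a chain is a set of pairwise related elements.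
  let r : U → U → Prop := fun a b => a.1 * star b.1 = 0 ∧ star a.1 * b.1 = 0
  have r_symm : ∀ {a b}, r a b → r b a := fun ⟨h, h'⟩ =>
    ⟨by simpa using congr(star $h), by simpa using congr(star $h')⟩
  obtain ⟨hchain, hmax⟩ : IsMaxChain r (maxChain r) := maxChain_spec
  have related : ∀ {a b : Subtype.val '' maxChain r}, a ≠ b →
      a.1 * star b.1 = 0 ∧ star a.1 * b.1 = 0 := by
    rintro ⟨_, a, ha, rfl⟩ ⟨_, b, hb, rfl⟩ hab
    exact (hchain ha hb fun h => hab (by simp only [h])).elim id r_symm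
  refine ⟨Subtype.val '' maxChain r, Subtype.coe_image_subset _ _, ⟨?_, ?_, ?_⟩, ?_⟩
  · rintro ⟨_, a, -, rfl⟩
    exact hU a a.2
  · exact fun a b hab => (related hab).1
  · exact fun a b hab => (related hab).2
  · intro u hu h
    have hins : IsChain r (insert ⟨u, hu⟩ (maxChain r)) :=
      hchain.insert fun b hb _ => Or.inl (h b.1 ⟨b, hb, rfl⟩)
    refine ⟨⟨u, hu⟩, ?_, rfl⟩
    rw [hmax hins (Set.subset_insert _ _)]
    exact Set.mem_insert _ _

end IsOrthogonalFamily

namespace IsPartialIsometry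

variable [NonUnitalNormedRing A] [StarRing A] [CStarRing A] {v : A}

theorem mul_star_mul_self (hv : IsPartialIsometry v) : v * (star v * v) = v := by
  rw [← sub_eq_zero, ← CStarRing.star_mul_self_eq_zero_iff]
  have hp : star v * v * (star v * v) = star v * v := hv.isIdempotentElem
  simp only [star_sub, star_mul, star_star, sub_mul, mul_sub, mul_assoc] at hp ⊢
  simp only [hp, sub_self]

theorem self_mul_star_mul (hv : IsPartialIsometry v) : v * star v * v = v := by
  rw [mul_assoc, hv.mul_star_mul_self]

protected theorem star (hv : IsPartialIsometry v) : IsPartialIsometry (star v) := by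
  refine isStarProjection_iff'.2 ⟨?_, by simp only [star_mul, star_star]⟩
  rw [star_star, ← mul_assoc, hv.self_mul_star_mul]

theorem isStarProjection_mul_star (hv : IsPartialIsometry v) :
    IsStarProjection (v * star v) := by
  simpa only [IsPartialIsometry, star_star] using hv.star

theorem norm_le_one (hv : IsPartialIsometry v) : ‖v‖ ≤ 1 := by
  have h : ‖star v * v‖ ≤ 1 := hv.norm_le
  rw [CStarRing.norm_star_mul_self] at h
  nlinarith [norm_nonneg v]

end IsPartialIsometry

end PartialIsometry

section LeftSupport

variable {H : Type*} [NormedAddCommGroup H] [InnerProductSpace ℂ H] [CompleteSpace H]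
  {T : Set (H →L[ℂ] H)} {M : VonNeumannAlgebra H} {b c y : H →L[ℂ] H}

/-- The left support of a set of operators: the projection onto the closed span of their ranges,
which is the least projection `p` with `p * b = b` for all `b ∈ T`. -/
def leftSupport (T : Set (H →L[ℂ] H)) : H →L[ℂ] H :=
  (⨆ b ∈ T, b.range).topologicalClosure.starProjection

theorem isStarProjection_leftSupport (T : Set (H →L[ℂ] H)) : IsStarProjection (leftSupport T) :=
  isStarProjection_starProjection

theorem leftSupport_mul (hb : b ∈ T) : leftSupport T * b = b := by
  ext ξ
  refine Submodule.starProjection_eq_self_iff.2 (Submodule.le_topologicalClosure _ ?_)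
  exact (le_iSup₂_of_le b hb le_rfl : b.range ≤ ⨆ b ∈ T, b.range) ⟨ξ, rfl⟩

theorem mul_leftSupport_eq_zero (h : ∀ b ∈ T, c * b = 0) : c * leftSupport T = 0 := by
  have hle : (⨆ b ∈ T, b.range).topologicalClosure ≤ c.ker := by
    refine Submodule.topologicalClosure_minimal _ (iSup₂_le fun b hb => ?_) c.isClosed_ker
    rintro _ ⟨ξ, rfl⟩
    exact congr($(h b hb) ξ)
  ext ξ
  exact hle (Submodule.starProjection_apply_mem _ ξ)

theorem commute_leftSupport (h : ∀ b ∈ T, leftSupport T * (y * b) = y * b)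
    (h' : ∀ b ∈ T, leftSupport T * (star y * b) = star y * b) : Commute y (leftSupport T) := by
  have invariant : ∀ x : H →L[ℂ] H, (∀ b ∈ T, leftSupport T * (x * b) = x * b) →
      leftSupport T * (x * leftSupport T) = x * leftSupport T := fun x hx => by
    have := mul_leftSupport_eq_zero (c := (1 - leftSupport T) * x) fun b hb => by
      rw [mul_assoc, sub_mul, one_mul, hx b hb, sub_self]
    rwa [mul_assoc, sub_mul, one_mul, sub_eq_zero, eq_comm] at this
  have hstar := congr(star $(invariant (star y) h'))
  simp only [star_mul, star_star, (isStarProjection_leftSupport T).isSelfAdjoint.star_eq] at hstar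
  exact (invariant y h).symm.trans ((mul_assoc _ _ _).symm.trans hstar)

theorem commute_leftSupport_of_commute (h : ∀ b ∈ T, Commute y b)
    (h' : ∀ b ∈ T, Commute (star y) b) : Commute y (leftSupport T) := by
  refine commute_leftSupport (fun b hb => ?_) fun b hb => ?_
  · rw [(h b hb).eq, ← mul_assoc, leftSupport_mul hb]
  · rw [(h' b hb).eq, ← mul_assoc, leftSupport_mul hb]

theorem mem_of_commute (h : ∀ y ∈ M.commutant, Commute y c) : c ∈ M := by
  rw [← M.commutant_commutant]
  exact VonNeumannAlgebra.mem_commutant_iff.2 h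

theorem commute_of_mem_commutant (hy : y ∈ M.commutant) (hb : b ∈ M) : Commute y b :=
  (VonNeumannAlgebra.mem_commutant_iff.1 hy b hb).symm

theorem leftSupport_mem (hT : T ⊆ M) : leftSupport T ∈ M :=
  mem_of_commute fun _ hy => commute_leftSupport_of_commute
    (fun _ hb => commute_of_mem_commutant hy (hT hb))
    fun _ hb => commute_of_mem_commutant (star_mem hy) (hT hb)

theorem exists_central_support (hb : b ∈ M) : ∃ z, IsCentralProjection M z ∧ z * b = b ∧
    ∀ c, (∀ m ∈ M, c * (m * b) = 0) → c * z = 0 := by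
  let T : Set (H →L[ℂ] H) := {x | ∃ m ∈ M, m * b = x}
  have hT : T ⊆ M := by
    rintro _ ⟨m, hm, rfl⟩
    exact mul_mem hm hb
  have hinv : ∀ m ∈ M, ∀ x ∈ T, leftSupport T * (m * x) = m * x := by
    rintro m hm _ ⟨m', hm', rfl⟩
    exact leftSupport_mul ⟨m * m', mul_mem hm hm', mul_assoc m m' b⟩
  refine ⟨leftSupport T, ⟨isStarProjection_iff'.1 (isStarProjection_leftSupport T),
    leftSupport_mem hT, fun m hm => ?_⟩, leftSupport_mul ⟨1, one_mem M, one_mul b⟩, fun c hc => ?_⟩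
  · exact (commute_leftSupport (hinv m hm) (hinv _ (star_mem hm))).symm
  · exact mul_leftSupport_eq_zero (by rintro _ ⟨m, hm, rfl⟩; exact hc m hm)

end LeftSupport

section PolarDecomposition

variable {H : Type*} [NormedAddCommGroup H] [InnerProductSpace ℂ H] [CompleteSpace H]
  {M : VonNeumannAlgebra H} {v x : H →L[ℂ] H}

theorem norm_abs_apply (x : H →L[ℂ] H) (ξ : H) : ‖CFC.abs x ξ‖ = ‖x ξ‖ := by
  have hadj : adjoint (CFC.abs x) = CFC.abs x := (CFC.abs_nonneg x).isSelfAdjoint.adjoint_eq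
  have hsq : adjoint (CFC.abs x) ∘L CFC.abs x = adjoint x ∘L x := by
    rw [hadj]; exact CFC.abs_mul_abs x
  rw [← sq_eq_sq₀ (norm_nonneg _) (norm_nonneg _), apply_norm_sq_eq_inner_adjoint_left, hsq,
    ← apply_norm_sq_eq_inner_adjoint_left]

theorem exists_mul_abs_eq (x : H →L[ℂ] H) :
    ∃ v, v * CFC.abs x = x ∧ v * leftSupport {CFC.abs x} = v := by
  let K : Submodule ℂ H := (CFC.abs x).range.topologicalClosure
  have hK : leftSupport {CFC.abs x} = K.starProjection := by
    simp only [leftSupport, Set.mem_singleton_iff, iSup_iSup_eq_left, K]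
  let e : H →ₗ[ℂ] K := LinearMap.codRestrict K (CFC.abs x).toLinearMap fun ξ =>
    Submodule.le_topologicalClosure _ ⟨ξ, rfl⟩
  have hdense : DenseRange e := by
    rw [DenseRange, Subtype.dense_iff]
    intro η hη
    rwa [← Set.range_comp]
  have hnorm : ∀ ξ, ‖(x : H →ₗ[ℂ] H) ξ‖ ≤ 1 * ‖e ξ‖ := fun ξ => by
    rw [one_mul]; exact (norm_abs_apply x ξ).ge
  refine ⟨(x : H →ₗ[ℂ] H).extendOfNorm e ∘L K.orthogonalProjectionOnto, ?_, ?_⟩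
  · ext ξ
    have : K.orthogonalProjectionOnto (CFC.abs x ξ) = e ξ :=
      K.orthogonalProjectionOnto_mem_subspace_eq_self (e ξ)
    simp only [mul_apply_eq_comp, coe_comp, Function.comp_apply, this,
      LinearMap.extendOfNorm_eq hdense ⟨1, hnorm⟩, coe_coe]
  · ext ξ
    rw [hK]
    simp only [mul_apply_eq_comp, coe_comp, Function.comp_apply, Submodule.starProjection_apply,
      Submodule.orthogonalProjectionOnto_mem_subspace_eq_self]

theorem star_mul_self_eq_leftSupport_abs (hv : v * CFC.abs x = x)
    (hv' : v * leftSupport {CFC.abs x} = v) : star v * v = leftSupport {CFC.abs x} := by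
  set h := CFC.abs x
  set P := leftSupport {h}
  have hP : IsStarProjection P := isStarProjection_leftSupport _
  have hh : star h = h := (CFC.abs_nonneg x).isSelfAdjoint.star_eq
  have hzero : h * (star v * v - 1) * P = 0 := by
    refine mul_leftSupport_eq_zero fun b hb => ?_
    rw [Set.mem_singleton_iff.1 hb, mul_sub, mul_one, sub_mul, sub_eq_zero, CFC.abs_mul_abs]
    calc h * (star v * v) * h = star (v * h) * (v * h) := by simp only [star_mul, hh, mul_assoc]
      _ = star x * x := by rw [hv]
  have hzero' : P * (star v * v - 1) * P = 0 := by
    refine mul_leftSupport_eq_zero fun b hb => ?_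
    simpa [hh, hP.isSelfAdjoint.star_eq, mul_assoc, Set.mem_singleton_iff.1 hb] using
      congr(star $hzero)
  have hPv : P * star v = star v := by
    simpa only [star_mul, hP.isSelfAdjoint.star_eq] using congr(star $hv')
  rw [mul_sub, mul_one, ← mul_assoc, hPv, sub_mul, hP.isIdempotentElem, mul_assoc, hv',
    sub_eq_zero] at hzero'
  exact hzero'

theorem mem_of_mul_abs_eq (hx : x ∈ M) (hv : v * CFC.abs x = x)
    (hv' : v * leftSupport {CFC.abs x} = v) : v ∈ M := by
  refine mem_of_commute fun y hy => sub_eq_zero.1 ?_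
  have hxy : Commute x y := (commute_of_mem_commutant hy hx).symm
  have hxy' : Commute x (star y) := (commute_of_mem_commutant (star_mem hy) hx).symm
  have hyx : Commute y (CFC.abs x) := hxy.cfcAbs_right hxy'
  have hyx' : Commute (star y) (CFC.abs x) := hxy'.cfcAbs_right (by rwa [star_star])
  have hyP : Commute y (leftSupport {CFC.abs x}) :=
    commute_leftSupport_of_commute (by simpa using hyx) (by simpa using hyx')
  have hzero : (y * v - v * y) * leftSupport {CFC.abs x} = 0 := by
    refine mul_leftSupport_eq_zero fun b hb => ?_
    rw [Set.mem_singleton_iff.1 hb, sub_mul, mul_assoc, hv, mul_assoc, hyx.eq, ← mul_assoc, hv,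
      hxy.eq, sub_self]
  rwa [sub_mul, mul_assoc, hv', mul_assoc, hyP.eq, ← mul_assoc, hv'] at hzero

theorem exists_polar_decomposition (hx : x ∈ M) :
    ∃ v ∈ M, IsPartialIsometry v ∧ v * star v * x = x ∧ (∀ g, g * x = x → g * v = v) ∧
      ∀ f, IsSelfAdjoint f → x * f = x → v * f = v := by
  obtain ⟨v, hv, hv'⟩ := exists_mul_abs_eq x
  have hsupp := star_mul_self_eq_leftSupport_abs hv hv'
  have hpi : IsPartialIsometry v := by
    rw [IsPartialIsometry, hsupp]; exact isStarProjection_leftSupport _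
  refine ⟨v, mem_of_mul_abs_eq hx hv hv', hpi, ?_, fun g hg => ?_, fun f hf hxf => ?_⟩
  · calc v * star v * x = v * star v * v * CFC.abs x := by rw [mul_assoc _ v, hv]
      _ = x := by rw [hpi.self_mul_star_mul, hv]
  · have : (g - 1) * v * leftSupport {CFC.abs x} = 0 := mul_leftSupport_eq_zero fun b hb => by
      rw [Set.mem_singleton_iff.1 hb, mul_assoc, hv, sub_mul, one_mul, hg, sub_self]
    rwa [mul_assoc, hv', sub_mul, one_mul, sub_eq_zero] at this
  · have habs : CFC.abs x * (1 - f) = 0 := by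
      ext ξ
      rw [zero_apply, ← norm_eq_zero, mul_apply_eq_comp, norm_abs_apply, ← mul_apply_eq_comp,
        mul_sub, mul_one, hxf, sub_self, zero_apply, norm_zero]
    have habs' : (1 - f) * CFC.abs x = 0 := by
      simpa [hf.star_eq, (CFC.abs_nonneg x).isSelfAdjoint.star_eq] using congr(star $habs)
    have hzero : (1 - f) * leftSupport {CFC.abs x} = 0 := mul_leftSupport_eq_zero (by simpa)
    have hstar : leftSupport {CFC.abs x} * (1 - f) = 0 := by
      simpa [hf.star_eq, (isStarProjection_leftSupport _).isSelfAdjoint.star_eq]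
        using congr(star $hzero)
    rw [eq_comm, ← sub_eq_zero, ← mul_one_sub, ← hv', mul_assoc, hstar, mul_zero]

end PolarDecomposition

section StrongSum

variable {H : Type*} [NormedAddCommGroup H] [InnerProductSpace ℂ H]
  {ι : Type*} {u : ι → H →L[ℂ] H} {v c d : H →L[ℂ] H}

/-- The operator `v` is the sum of the family `u` in the strong operator topology. -/
def HasStrongSum (u : ι → H →L[ℂ] H) (v : H →L[ℂ] H) : Prop :=
  ∀ ξ, HasSum (fun i => u i ξ) (v ξ)

namespace HasStrongSum

theorem mul_left (hv : HasStrongSum u v) (c : H →L[ℂ] H) :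
    HasStrongSum (fun i => c * u i) (c * v) :=
  fun ξ => (hv ξ).mapL c

theorem mul_right (hv : HasStrongSum u v) (c : H →L[ℂ] H) :
    HasStrongSum (fun i => u i * c) (v * c) :=
  fun ξ => hv (c ξ)

protected theorem unique (hc : HasStrongSum u c) (hd : HasStrongSum u d) : c = d :=
  ContinuousLinearMap.ext fun ξ => (hc ξ).unique (hd ξ)

theorem mul_left_congr (hv : HasStrongSum u v) (h : ∀ i, c * u i = d * u i) : c * v = d * v :=
  (hv.mul_left c).unique (by simpa only [h] using hv.mul_left d)

theorem mul_right_congr (hv : HasStrongSum u v) (h : ∀ i, u i * c = u i * d) : v * c = v * d :=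
  (hv.mul_right c).unique (by simpa only [h] using hv.mul_right d)

theorem eq_single {i : ι} (hv : HasStrongSum u v) (h : ∀ j, j ≠ i → u j = 0) : v = u i :=
  hv.unique fun ξ => hasSum_single i fun j hj => by rw [h j hj, zero_apply]

variable [CompleteSpace H] {M : VonNeumannAlgebra H}

theorem mem (hv : HasStrongSum u v) (hu : ∀ i, u i ∈ M) : v ∈ M :=
  mem_of_commute fun y hy => (hv.mul_left y).unique <| by
    simpa only [(commute_of_mem_commutant hy (hu _)).eq] using hv.mul_right y

end HasStrongSum

namespace IsOrthogonalFamily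

variable [CompleteSpace H]

theorem orthogonalFamily (hu : IsOrthogonalFamily u) :
    OrthogonalFamily ℂ (fun i => (u i).range) fun i => (u i).range.subtypeₗᵢ := by
  rintro i j hij ⟨_, ξ, rfl⟩ ⟨_, η, rfl⟩
  have h : adjoint (u i) (u j η) = 0 := congr($(hu.star_mul_eq_zero hij) η)
  exact (adjoint_inner_right (u i) ξ (u j η)).symm.trans (by rw [h, inner_zero_right])

theorem summable_apply (hu : IsOrthogonalFamily u) (ξ : H) : Summable fun i => u i ξ := by
  have horth := hu.orthogonalFamily
  let f : ∀ i, (u i).range := fun i => ⟨u i ξ, ξ, rfl⟩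
  refine (horth.summable_iff_norm_sq_summable f).2 <|
    summable_of_sum_le (c := ‖ξ‖ ^ 2) (fun i => sq_nonneg _) fun s => ?_
  have hsum : ∑ i ∈ s, (u i).range.subtypeₗᵢ (f i) = (∑ i ∈ s, u i) ξ :=
    (sum_apply s u ξ).symm
  rw [← horth.norm_sum, hsum]
  gcongr
  simpa using le_of_opNorm_le _ (hu.isPartialIsometry_sum s).norm_le_one ξ

theorem exists_hasStrongSum (hu : IsOrthogonalFamily u) : ∃ v, HasStrongSum u v := by
  have hbdd : Bornology.IsBounded (Set.range fun s : Finset ι => ∑ i ∈ s, u i) :=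
    isBounded_iff_forall_norm_le.2
      ⟨1, Set.forall_mem_range.2 fun s => (hu.isPartialIsometry_sum s).norm_le_one⟩
  have hlim : Tendsto (fun (s : Finset ι) ξ => (∑ i ∈ s, u i) ξ) atTop
      (𝓝 fun ξ => ∑' i, u i ξ) := tendsto_pi_nhds.2 fun ξ => by
    simpa only [HasSum, SummationFilter.unconditional_filter, sum_apply] using
      (hu.summable_apply ξ).hasSum
  exact ⟨ofTendstoOfBoundedRange _ _ hlim hbdd, fun ξ => (hu.summable_apply ξ).hasSum⟩

theorem star_mul_of_hasStrongSum (hu : IsOrthogonalFamily u) (hv : HasStrongSum u v) (i : ι) :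
    star (u i) * v = star (u i) * u i :=
  (hv.mul_left _).eq_single fun _ hj => hu.star_mul_eq_zero hj.symm

theorem mul_star_of_hasStrongSum (hu : IsOrthogonalFamily u) (hv : HasStrongSum u v) (i : ι) :
    v * star (u i) = u i * star (u i) :=
  (hv.mul_right _).eq_single fun _ hj => hu.mul_star_eq_zero hj

theorem mul_star_mul_of_hasStrongSum (hu : IsOrthogonalFamily u) (hv : HasStrongSum u v) (i : ι) :
    v * star v * u i = u i := by
  calc v * star v * u i = v * star (star (u i) * v) := by
        simp only [star_mul, star_star, mul_assoc]
    _ = v * star (u i) * u i := by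
        simp only [hu.star_mul_of_hasStrongSum hv, star_mul, star_star, mul_assoc]
    _ = u i := by
        rw [hu.mul_star_of_hasStrongSum hv, (hu.isPartialIsometry i).self_mul_star_mul]

theorem isPartialIsometry_of_hasStrongSum (hu : IsOrthogonalFamily u) (hv : HasStrongSum u v) :
    IsPartialIsometry v := by
  have h : v * star v * v = v := by
    simpa using hv.mul_left_congr (d := 1) fun i => by
      rw [hu.mul_star_mul_of_hasStrongSum hv, one_mul]
  exact isStarProjection_iff'.2
    ⟨by rw [mul_assoc, ← mul_assoc v, h], by simp only [star_mul, star_star]⟩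

theorem mul_initial_of_hasStrongSum (hu : IsOrthogonalFamily u) (hv : HasStrongSum u v) (i : ι) :
    u i * (star v * v) = u i := by
  have h : u i * star v = u i * star (u i) := by
    simpa using congr(star $(hu.mul_star_of_hasStrongSum hv i))
  rw [← mul_assoc, h, mul_assoc, hu.star_mul_of_hasStrongSum hv,
    (hu.isPartialIsometry i).mul_star_mul_self]

end IsOrthogonalFamily

end StrongSum

section Comparison

variable {H : Type*} [NormedAddCommGroup H] [InnerProductSpace ℂ H] [CompleteSpace H]
  {M : VonNeumannAlgebra H} {a d f g m : H →L[ℂ] H}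

theorem mul_mul_eq_zero_of_forall_isPartialIsometry (ha : a ∈ M) (ha' : IsStarProjection a)
    (hd : d ∈ M) (hd' : IsStarProjection d)
    (h : ∀ u ∈ M, IsPartialIsometry u → a * u = u → u * d = u → u = 0) (hm : m ∈ M) :
    a * (m * d) = 0 := by
  obtain ⟨u, huM, hu, hux, hleft, hright⟩ :=
    exists_polar_decomposition (mul_mem ha (mul_mem hm hd))
  have hau : a * u = u := hleft a (by rw [← mul_assoc, ha'.isIdempotentElem])
  have hud : u * d = u :=
    hright d hd'.isSelfAdjoint (by simp only [mul_assoc, hd'.isIdempotentElem.eq])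
  rw [← hux, h u huM hu hau hud, zero_mul, zero_mul]

theorem exists_maximal_partialIsometry (hf : f ∈ M) (hf' : IsStarProjection f) (hg : g ∈ M)
    (hg' : IsStarProjection g) : ∃ v ∈ M, IsPartialIsometry v ∧ g * v = v ∧ v * f = v ∧
      ∀ m ∈ M, (g - v * star v) * (m * (f - star v * v)) = 0 := by
  obtain ⟨S, hSU, hS, hmax⟩ := IsOrthogonalFamily.exists_maximal
    (U := {u | u ∈ M ∧ IsPartialIsometry u ∧ g * u = u ∧ u * f = u}) fun u hu => hu.2.1
  obtain ⟨v, hv⟩ := hS.exists_hasStrongSum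
  have hvM : v ∈ M := hv.mem fun s => (hSU s.2).1
  have hgv : g * v = v := by
    simpa using hv.mul_left_congr (d := 1) fun s => by rw [(hSU s.2).2.2.1, one_mul]
  have hvf : v * f = v := by
    simpa using hv.mul_right_congr (d := 1) fun s => by rw [(hSU s.2).2.2.2, mul_one]
  have hvpi : IsPartialIsometry v := hS.isPartialIsometry_of_hasStrongSum hv
  have ha : IsStarProjection (g - v * star v) :=
    hvpi.isStarProjection_mul_star.sub_of_mul_eq_right hg' (by rw [← mul_assoc, hgv])
  have hd : IsStarProjection (f - star v * v) :=
    hvpi.sub_of_mul_eq_left hf' (by rw [mul_assoc, hvf])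
  have haS : ∀ s ∈ S, (g - v * star v) * s = 0 := fun s hs => by
    rw [sub_mul, hS.mul_star_mul_of_hasStrongSum hv ⟨s, hs⟩, (hSU hs).2.2.1, sub_self]
  have hSd : ∀ s ∈ S, s * (f - star v * v) = 0 := fun s hs => by
    rw [mul_sub, hS.mul_initial_of_hasStrongSum hv ⟨s, hs⟩, (hSU hs).2.2.2, sub_self]
  refine ⟨v, hvM, hvpi, hgv, hvf, fun m hm => mul_mul_eq_zero_of_forall_isPartialIsometry
    (sub_mem hg (mul_mem hvM (star_mem hvM))) ha (sub_mem hf (mul_mem (star_mem hvM) hvM)) hd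
    (fun u huM hu hau hud => ?_) hm⟩
  have hgu : g * u = u := by
    rw [← hau, ← mul_assoc, mul_sub, hg'.isIdempotentElem, ← mul_assoc, hgv]
  have huf : u * f = u := by
    rw [← hud, mul_assoc, sub_mul, hf'.isIdempotentElem, mul_assoc, hvf]
  have huS : u ∈ S := by
    refine hmax u ⟨huM, hu, hgu, huf⟩ fun s hs => ⟨?_, ?_⟩
    · have : (f - star v * v) * star s = 0 := by
        simpa [hf'.isSelfAdjoint.star_eq] using congr(star $(hSd s hs))
      rw [← hud, mul_assoc, this, mul_zero]
    · rw [← hau, star_mul, ha.isSelfAdjoint.star_eq, mul_assoc, haS s hs, mul_zero]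
  rw [← hau, haS u huS]

theorem exists_partialIsometry_comparison (hf : f ∈ M) (hf' : IsStarProjection f) (hg : g ∈ M)
    (hg' : IsStarProjection g) : ∃ v ∈ M, IsPartialIsometry v ∧ g * v = v ∧ v * f = v ∧
      ∃ z, IsCentralProjection M z ∧ z * (f - star v * v) = f - star v * v ∧
        z * (g - v * star v) = 0 := by
  obtain ⟨v, hvM, hv, hgv, hvf, hzero⟩ := exists_maximal_partialIsometry hf hf' hg hg'
  obtain ⟨z, hz, hzf, hzg⟩ :=
    exists_central_support (sub_mem hf (mul_mem (star_mem hvM) hvM))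
  refine ⟨v, hvM, hv, hgv, hvf, z, hz, hzf, ?_⟩
  rw [hz.2.2 _ (sub_mem hg (mul_mem hvM (star_mem hvM)))]
  exact hzg _ hzero

end Comparison

section Trace

variable {H : Type*} [NormedAddCommGroup H] [InnerProductSpace ℂ H] [CompleteSpace H]
  {M : VonNeumannAlgebra H} {τ : (H →L[ℂ] H) → ENNReal} {p q v x y z : H →L[ℂ] H}

theorem isTauFiniteProjection_iff :
    IsTauFiniteProjection M τ p ↔ p ∈ M ∧ IsStarProjection p ∧ τ p < ⊤ := by
  rw [isStarProjection_iff']; rfl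

theorem IsTauFiniteProjection.isStarProjection (hp : IsTauFiniteProjection M τ p) :
    IsStarProjection p :=
  (isTauFiniteProjection_iff.1 hp).2.1

theorem isStarProjection_of_isCentralProjection (hz : IsCentralProjection M z) :
    IsStarProjection z :=
  isStarProjection_iff'.2 hz.1

namespace IsFNSTrace

variable (hτ : IsFNSTrace M τ)
include hτ

theorem add_eq_of_le (hx : x ∈ M) (hy : y ∈ M) (hx0 : 0 ≤ x) (hxy : x ≤ y) :
    τ x + τ (y - x) = τ y := by
  rw [← hτ.additive x (y - x) hx (sub_mem hy hx) hx0 (sub_nonneg.2 hxy), add_sub_cancel]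

theorem mono (hx : x ∈ M) (hy : y ∈ M) (hx0 : 0 ≤ x) (hxy : x ≤ y) : τ x ≤ τ y :=
  le_self_add.trans_eq (hτ.add_eq_of_le hx hy hx0 hxy)

theorem isTauFiniteProjection_zero : IsTauFiniteProjection M τ 0 :=
  isTauFiniteProjection_iff.2 ⟨zero_mem M, .zero _, by simp [hτ.map_zero]⟩

theorem isTauFiniteProjection_add (hp : IsTauFiniteProjection M τ p)
    (hq : IsTauFiniteProjection M τ q) (hpq : p * q = 0) : IsTauFiniteProjection M τ (p + q) := by
  refine isTauFiniteProjection_iff.2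
    ⟨add_mem hp.1 hq.1, hp.isStarProjection.add hq.isStarProjection hpq, ?_⟩
  rw [hτ.additive p q hp.1 hq.1 hp.isStarProjection.nonneg hq.isStarProjection.nonneg]
  exact ENNReal.add_lt_top.2 ⟨hp.2.2, hq.2.2⟩

theorem isTauFiniteProjection_of_mul_eq (hq : IsTauFiniteProjection M τ q)
    (hp : IsStarProjection p) (hpM : p ∈ M) (hqp : q * p = p) : IsTauFiniteProjection M τ p :=
  isTauFiniteProjection_iff.2 ⟨hpM, hp, (hτ.mono hpM hq.1 hp.nonneg
    ((hp.le_iff_mul_eq_right hq.isStarProjection).2 hqp)).trans_lt hq.2.2⟩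

theorem isTauFiniteProjection_mul_of_isCentralProjection (hp : IsTauFiniteProjection M τ p)
    (hz : IsCentralProjection M z) : IsTauFiniteProjection M τ (z * p) := by
  have hzp : z * p = p * z := hz.2.2 p hp.1
  refine hτ.isTauFiniteProjection_of_mul_eq hp
    ((isStarProjection_of_isCentralProjection hz).mul hp.isStarProjection hzp)
    (mul_mem hz.2.1 hp.1) ?_
  rw [hzp, ← mul_assoc, hp.isStarProjection.isIdempotentElem]

theorem isTauFiniteProjection_mul_star (hv : IsPartialIsometry v) (hvM : v ∈ M)
    (hq : IsTauFiniteProjection M τ q) (hvq : v * q = v) :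
    IsTauFiniteProjection M τ (v * star v) := by
  refine isTauFiniteProjection_iff.2
    ⟨mul_mem hvM (star_mem hvM), hv.isStarProjection_mul_star, ?_⟩
  rw [← hτ.tracial v hvM]
  have hle : star v * v ≤ q :=
    (IsStarProjection.le_iff_mul_eq_left hv hq.isStarProjection).2 (by rw [mul_assoc, hvq])
  exact (hτ.mono (mul_mem (star_mem hvM) hvM) hq.1 hv.nonneg hle).trans_lt hq.2.2

theorem exists_isTauFiniteProjection_mul_eq (hx : x ∈ M) (hq : IsTauFiniteProjection M τ q)
    (hxq : x * q = x) :
    ∃ r, IsTauFiniteProjection M τ r ∧ r * x = x ∧ ∀ g, g * x = x → g * r = r := by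
  obtain ⟨v, hvM, hv, hvx, hleft, hright⟩ := exists_polar_decomposition hx
  exact ⟨v * star v,
    hτ.isTauFiniteProjection_mul_star hv hvM hq (hright q hq.isStarProjection.isSelfAdjoint hxq),
    hvx, fun g hg => by rw [← mul_assoc, hleft g hg]⟩

theorem isFiniteProjection (hp : IsTauFiniteProjection M τ p) : IsFiniteProjection M p := by
  refine ⟨hp.1, hp.2.1, ?_⟩
  rintro _ hqM hq hpq ⟨v, hv, rfl, rfl⟩
  have hq' := isStarProjection_iff'.2 hq
  have hle := (hq'.le_iff_mul_eq_right hp.isStarProjection).2 hpq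
  have hadd := hτ.add_eq_of_le hqM hp.1 hq'.nonneg hle
  rw [hτ.tracial v hv] at hadd
  have hzero : τ (v * star v - star v * v) = 0 := by
    simpa using (ENNReal.add_right_inj hp.2.2.ne).1 (hadd.trans (add_zero _).symm)
  exact (sub_eq_zero.1 (hτ.faithful _ (sub_mem hp.1 hqM) (sub_nonneg.2 hle) hzero)).symm

end IsFNSTrace

end Trace

section WZstar

variable {H : Type*} [NormedAddCommGroup H] [InnerProductSpace ℂ H] [CompleteSpace H]
  {M : VonNeumannAlgebra H} {S : Set (H →L[ℂ] H)}

theorem exists_coe_eq_centralizer (hS : ∀ a ∈ S, star a ∈ S) :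
    ∃ W : VonNeumannAlgebra H, (W : Set (H →L[ℂ] H)) = S.centralizer := by
  have hunion : S ∪ star S = S :=
    Set.union_eq_left.2 fun a ha => star_star a ▸ hS _ (Set.mem_star.1 ha)
  have hcoe : (StarSubalgebra.centralizer ℂ S : Set (H →L[ℂ] H)) = S.centralizer := by
    rw [StarSubalgebra.coe_centralizer, hunion]
  refine ⟨⟨StarSubalgebra.centralizer ℂ S, ?_⟩, hcoe⟩
  exact (congrArg (fun U => U.centralizer.centralizer) hcoe).trans
    ((Set.centralizer_centralizer_centralizer S).trans hcoe.symm)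

theorem star_mem_centerSet {z : H →L[ℂ] H} (hz : z ∈ centerSet M) : star z ∈ centerSet M :=
  ⟨star_mem hz.1, fun y hy => by simpa using congr(star $(hz.2 (star y) (star_mem hy))).symm⟩

theorem exists_coe_eq_WZstar (hS : ∀ a ∈ S, star a ∈ S) :
    ∃ W : VonNeumannAlgebra H, (W : Set (H →L[ℂ] H)) = WZstar M S := by
  have hstar : ∀ a ∈ S ∪ centerSet M, star a ∈ S ∪ centerSet M := fun a ha =>
    ha.imp (hS a) star_mem_centerSet
  exact exists_coe_eq_centralizer fun a ha => Set.star_mem_centralizer' hstar ha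

theorem WZstar_subset (hS : S ⊆ M) : WZstar M S ⊆ M := by
  rw [← M.centralizer_centralizer]
  exact Set.centralizer_subset (Set.centralizer_subset (Set.union_subset hS fun _ hz => hz.1))

theorem subset_WZstar : S ∪ centerSet M ⊆ WZstar M S :=
  Set.subset_centralizer_centralizer

theorem WZstar_commute (hS : S ⊆ M) (hcomm : ∀ a ∈ S, ∀ b ∈ S, a * b = b * a) :
    ∀ x ∈ WZstar M S, ∀ y ∈ WZstar M S, x * y = y * x := by
  refine Set.centralizer_centralizer_comm_of_comm ?_
  rintro a (ha | ha) b (hb | hb)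
  · exact hcomm a ha b hb
  · exact (hb.2 a (hS ha)).symm
  · exact ha.2 b (hS hb)
  · exact ha.2 b hb.1

end WZstar

section Diffuse

variable {H : Type*} [NormedAddCommGroup H] [InnerProductSpace ℂ H] [CompleteSpace H]
  {M W : VonNeumannAlgebra H} {τ : (H →L[ℂ] H) → ENNReal} {e f q : H →L[ℂ] H}

theorem IsFNSTrace.exists_isTauFiniteProjection_mul_sub_eq_zero (hτ : IsFNSTrace M τ)
    (heM : e ∈ M) (he : IsStarProjection e) (hq : IsTauFiniteProjection M τ q) :
    ∃ r, IsTauFiniteProjection M τ r ∧ e * r = r ∧ r * e = r ∧ q * (e - r) = 0 := by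
  obtain ⟨r, hr, hreq, hrmin⟩ := hτ.exists_isTauFiniteProjection_mul_eq (mul_mem heM hq.1) hq
    (by rw [mul_assoc, hq.isStarProjection.isIdempotentElem])
  have hr_star := hr.isStarProjection.isSelfAdjoint.star_eq
  have her : e * r = r := hrmin e (by rw [← mul_assoc, he.isIdempotentElem])
  have hre : r * e = r := by simpa [he.isSelfAdjoint.star_eq, hr_star] using congr(star $her)
  have hzero : (e - r) * q = 0 := by rw [← hre, sub_mul, mul_assoc, hreq, sub_self]
  refine ⟨r, hr, her, hre, ?_⟩
  simpa [he.isSelfAdjoint.star_eq, hr_star, hq.isStarProjection.isSelfAdjoint.star_eq]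
    using congr(star $hzero)

/- If the comparison of `f` with `e - r` stopped short of `f` on a central summand `z`, then `z * e`
would be exhausted by the τ-finite projections `z * r` and `z * (v * star v)`. -/
theorem IsFNSTrace.exists_equivalent_orthogonal (hτ : IsFNSTrace M τ) (hWM : W ≤ M)
    (hZ : centerSet M ⊆ W) (hW : ∀ x ∈ W, IsTauFiniteProjection M τ x → x = 0)
    (heW : e ∈ W) (he : IsStarProjection e) (hf : IsTauFiniteProjection M τ f) (hef : e * f = f)
    (hq : IsTauFiniteProjection M τ q) : ∃ v ∈ M, star v * v = f ∧ e * v = v ∧ q * v = 0 := by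
  obtain ⟨r, hr, her, hre, hqg⟩ :=
    hτ.exists_isTauFiniteProjection_mul_sub_eq_zero (hWM heW) he hq
  obtain ⟨v, hvM, hv, hgv, hvf, z, hz, hzf, hzg⟩ :=
    exists_partialIsometry_comparison hf.1 hf.isStarProjection (sub_mem (hWM heW) hr.1)
      (hr.isStarProjection.sub_of_mul_eq_right he her)
  have hev : e * v = v := by
    rw [← hgv, ← mul_assoc, mul_sub, he.isIdempotentElem, her]
  have hrv : r * v = 0 := by
    rw [← hgv, ← mul_assoc, mul_sub, hre, hr.isStarProjection.isIdempotentElem, sub_self, zero_mul]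
  have hze : z * e = z * (r + v * star v) := by
    rwa [mul_sub, mul_sub, sub_sub, ← mul_add, sub_eq_zero] at hzg
  have hze_zero : z * e = 0 := by
    refine hW _ (mul_mem (hZ hz.2) heW) ?_
    rw [hze]
    exact hτ.isTauFiniteProjection_mul_of_isCentralProjection
      (hτ.isTauFiniteProjection_add hr (hτ.isTauFiniteProjection_mul_star hv hvM hf hvf)
        (by rw [← mul_assoc, hrv, zero_mul])) hz
  refine ⟨v, hvM, ?_, hev, by rw [← hgv, ← mul_assoc, hqg, zero_mul]⟩
  have hfv : f * star v = star v := by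
    simpa [hf.isStarProjection.isSelfAdjoint.star_eq] using congr(star $hvf)
  have hed : e * (f - star v * v) = f - star v * v := by
    rw [mul_sub, hef, ← mul_assoc, ← hfv, ← mul_assoc e, hef]
  rw [eq_comm, ← sub_eq_zero, ← hzf, ← hed, ← mul_assoc, hze_zero, zero_mul]

end Diffuse

section Bisection

variable {H : Type*} [NormedAddCommGroup H] [InnerProductSpace ℂ H] [CompleteSpace H]
  {W : VonNeumannAlgebra H} {a e f : H →L[ℂ] H} {c t : ℝ}

theorem norm_sub_smul_one_le {A : Type*} [CStarAlgebra A] [PartialOrder A] [StarOrderedRing A]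
    {x : A} (hx : 0 ≤ x) (hc : ‖x‖ ≤ 2 * c) : ‖x - c • (1 : A)‖ ≤ c := by
  have hc0 : 0 ≤ c := by linarith [norm_nonneg x]
  have hle : x ≤ algebraMap ℝ A (2 * c) :=
    (CStarAlgebra.norm_le_iff_le_algebraMap x (by linarith) hx).1 hc
  have hcfc : cfc (fun r : ℝ => r - c) x = x - c • (1 : A) := by
    rw [cfc_sub (fun r => r) (fun _ => c) x, cfc_id' ℝ x, cfc_const c x,
      Algebra.algebraMap_eq_smul_one]
  rw [← hcfc]
  refine norm_cfc_le hc0 fun r hr => abs_le.2 ⟨?_, ?_⟩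
  · linarith [spectrum_nonneg_of_nonneg hx hr]
  · linarith [(le_algebraMap_iff_spectrum_le (ha := .of_nonneg hx)).1 hle r hr]

theorem norm_sub_smul_one_mul_le {A : Type*} [CStarAlgebra A] [PartialOrder A]
    [StarOrderedRing A] {b p : A} (hp : IsStarProjection p) (hb : 0 ≤ b * p)
    (hc : ‖b * p‖ ≤ 2 * c) : ‖(b - c • (1 : A)) * p‖ ≤ c := by
  have hmul : (b - c • (1 : A)) * p = (b * p - c • (1 : A)) * p := by
    rw [sub_mul, sub_mul, mul_assoc, hp.isIdempotentElem]
  rw [hmul]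
  exact (norm_mul_le _ _).trans
    ((mul_le_of_le_one_right (norm_nonneg _) hp.norm_le).trans (norm_sub_smul_one_le hb hc))

theorem exists_posPart_projection (ha : a ∈ W) (ha' : IsSelfAdjoint a) :
    ∃ P ∈ W, IsStarProjection P ∧ a * P = a⁺ ∧ a * (1 - P) = -a⁻ := by
  let P := leftSupport {a⁺}
  have hpos_mem : a⁺ ∈ W := mem_of_commute fun y hy =>
    ((commute_of_mem_commutant hy ha).symm.cfcₙ_real _).symm
  have hP : P * a⁺ = a⁺ := leftSupport_mul rfl
  have hneg : a⁻ * P = 0 := mul_leftSupport_eq_zero (by simp)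
  have hpos : a⁺ * P = a⁺ := by
    simpa [(isStarProjection_leftSupport {a⁺}).isSelfAdjoint.star_eq, P,
      (CFC.posPart_nonneg a).isSelfAdjoint.star_eq] using congr(star $hP)
  have haP : a * P = a⁺ := by
    nth_rw 1 [← CFC.posPart_sub_negPart a]
    rw [sub_mul, hneg, hpos, sub_zero]
  refine ⟨P, leftSupport_mem (by simpa using hpos_mem), isStarProjection_leftSupport _, haP, ?_⟩
  rw [mul_sub, haP, mul_one, sub_eq_iff_eq_add, neg_add_eq_sub, CFC.posPart_sub_negPart a]

theorem exists_bisection (hW : ∀ x ∈ W, ∀ y ∈ W, Commute x y) (ha : a ∈ W)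
    (ha' : IsSelfAdjoint a) (heW : e ∈ W) (he : IsStarProjection e)
    (hc : ‖(a - t • (1 : H →L[ℂ] H)) * e‖ ≤ 2 * c) :
    ∃ P ∈ W, IsStarProjection P ∧ ‖(a - (t + c) • (1 : H →L[ℂ] H)) * (e * P)‖ ≤ c ∧
      ‖(a - (t - c) • (1 : H →L[ℂ] H)) * (e * (1 - P))‖ ≤ c := by
  set b := a - t • (1 : H →L[ℂ] H) with hb
  have hbW : b ∈ W := sub_mem ha (mem_of_commute fun y _ => (Commute.one_right y).smul_right t)
  have hb' : IsSelfAdjoint b := ha'.sub (IsSelfAdjoint.all t |>.smul (.one _))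
  have hbe : Commute b e := hW b hbW e heW
  obtain ⟨P, hPW, hP, hpos, hneg⟩ := exists_posPart_projection hbW hb'
  have norm_le {Q : H →L[ℂ] H} (hQ : IsStarProjection Q) : ‖b * (e * Q)‖ ≤ 2 * c := by
    rw [← mul_assoc]
    exact (norm_mul_le _ _).trans ((mul_le_of_le_one_right (norm_nonneg _) hQ.norm_le).trans hc)
  refine ⟨P, hPW, hP, ?_, ?_⟩
  · have hnonneg : 0 ≤ b * (e * P) := by
      rw [hbe.left_comm, hpos]
      exact Commute.mul_nonneg he.nonneg (CFC.posPart_nonneg b) (hbe.cfcₙ_real _).symm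
    simpa only [hb, sub_sub, ← add_smul] using
      norm_sub_smul_one_mul_le (he.mul hP (hW e heW P hPW)) hnonneg (norm_le hP)
  · have hnonneg : 0 ≤ -b * (e * (1 - P)) := by
      rw [neg_mul, hbe.left_comm, hneg, mul_neg, neg_neg]
      exact Commute.mul_nonneg he.nonneg (CFC.negPart_nonneg b) (hbe.cfcₙ_real _).symm
    have hle := norm_sub_smul_one_mul_le
      (he.mul hP.one_sub (hW e heW _ (sub_mem (one_mem W) hPW))) hnonneg
      (by rw [neg_mul, norm_neg]; exact norm_le hP.one_sub)
    rwa [← neg_add', neg_mul, norm_neg, hb, sub_add, ← sub_smul] at hle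

/-- On the range of the projection `e`, the operator `a` is within `δ` of some real scalar. -/
def IsNearlyScalarOn (a : H →L[ℂ] H) (δ : ℝ) (e : H →L[ℂ] H) : Prop :=
  ∃ t : ℝ, ‖(a - t • (1 : H →L[ℂ] H)) * e‖ ≤ δ

theorem IsNearlyScalarOn.of_mul_eq {δ : ℝ} (h : IsNearlyScalarOn a δ e) (hf : IsStarProjection f)
    (hef : e * f = f) : IsNearlyScalarOn a δ f := by
  obtain ⟨t, ht⟩ := h
  refine ⟨t, ?_⟩
  rw [← hef, ← mul_assoc]
  exact (norm_mul_le _ _).trans ((mul_le_of_le_one_right (norm_nonneg _) hf.norm_le).trans ht)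

/- Halving the oscillation of `a` by bisection, finitely many times, reduces the statement to
projections on which `a` is nearly constant. -/
theorem bisection_induction {C : (H →L[ℂ] H) → Prop} {δ : ℝ} (hδ : 0 < δ)
    (hW : ∀ x ∈ W, ∀ y ∈ W, Commute x y) (ha : a ∈ W) (ha' : IsSelfAdjoint a)
    (hadd : ∀ e ∈ W, ∀ f ∈ W, IsStarProjection e → IsStarProjection f → e * f = 0 →
      C e → C f → C (e + f))
    (hsmall : ∀ e ∈ W, IsStarProjection e → IsNearlyScalarOn a δ e → C e)
    (heW : e ∈ W) (he : IsStarProjection e) : C e := by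
  have halving (m : ℕ) : ∀ e ∈ W, IsStarProjection e →
      IsNearlyScalarOn a (2 ^ m * δ) e → C e := by
    induction m with
    | zero => simpa only [pow_zero, one_mul] using hsmall
    | succ m ih =>
      rintro e heW he ⟨t, ht⟩
      obtain ⟨P, hPW, hP, hright, hleft⟩ := exists_bisection hW ha ha' heW he
        (ht.trans_eq (by ring : _ = 2 * (2 ^ m * δ)))
      have hP'W := sub_mem (one_mem W) hPW
      have hzero : e * P * (e * (1 - P)) = 0 := by
        rw [(hW P hPW e heW).mul_mul_mul_comm, hP.mul_one_sub_self, mul_zero]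
      have := hadd _ (mul_mem heW hPW) _ (mul_mem heW hP'W) (he.mul hP (hW e heW P hPW))
        (he.mul hP.one_sub (hW e heW _ hP'W)) hzero
        (ih _ (mul_mem heW hPW) (he.mul hP (hW e heW P hPW)) ⟨_, hright⟩)
        (ih _ (mul_mem heW hP'W) (he.mul hP.one_sub (hW e heW _ hP'W)) ⟨_, hleft⟩)
      rwa [← mul_add, add_sub_cancel, mul_one] at this
  obtain ⟨m, hm⟩ := pow_unbounded_of_one_lt (‖a‖ / δ) one_lt_two
  refine halving m e heW he ⟨0, ?_⟩
  rw [zero_smul, sub_zero]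
  exact (norm_mul_le _ _).trans ((mul_le_of_le_one_right (norm_nonneg _) he.norm_le).trans
    ((div_lt_iff₀ hδ).1 hm).le)

theorem projection_induction {ι : Type*} [Finite ι] {α : ι → H →L[ℂ] H}
    {C : (H →L[ℂ] H) → Prop} {δ : ℝ} (hδ : 0 < δ)
    (hW : ∀ x ∈ W, ∀ y ∈ W, Commute x y) (hα : ∀ j, α j ∈ W) (hα' : ∀ j, IsSelfAdjoint (α j))
    (hadd : ∀ e ∈ W, ∀ f ∈ W, IsStarProjection e → IsStarProjection f → e * f = 0 →
      C e → C f → C (e + f))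
    (hsmall : ∀ e ∈ W, IsStarProjection e → (∀ j, IsNearlyScalarOn (α j) δ e) → C e) : C 1 := by
  classical
  cases nonempty_fintype ι
  have key (s : Finset ι) : ∀ e ∈ W, IsStarProjection e →
      (∀ j ∉ s, IsNearlyScalarOn (α j) δ e) → C e := by
    induction s using Finset.induction_on with
    | empty => simpa only [Finset.notMem_empty, not_false_eq_true, forall_const] using hsmall
    | insert j s _ ih =>
      intro e heW he
      refine bisection_induction
        (C := fun e => (∀ i ∉ insert j s, IsNearlyScalarOn (α i) δ e) → C e) hδ hW (hα j)
        (hα' j) (fun e heW f hfW he hf hef hCe hCf h => ?_)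
        (fun e heW he hj h => ih e heW he fun i hi => ?_) heW he
      · have hfe : f * e = 0 := (hW f hfW e heW).trans hef
        refine hadd e heW f hfW he hf hef (hCe fun i hi => (h i hi).of_mul_eq he ?_)
          (hCf fun i hi => (h i hi).of_mul_eq hf ?_)
        · rw [add_mul, he.isIdempotentElem, hfe, add_zero]
        · rw [add_mul, hf.isIdempotentElem, hef, zero_add]
      · obtain rfl | hij := eq_or_ne i j
        · exact hj
        · exact h i (by simp only [Finset.mem_insert, hij, hi, or_self, not_false_eq_true])
  exact key Finset.univ 1 (one_mem W) (.one _) fun j hj => absurd (Finset.mem_univ j) hj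

end Bisection

section BlockNorm

variable {A : Type*} [CStarAlgebra A] [PartialOrder A] [StarOrderedRing A] {c : ℝ} {e f x y : A}

theorem star_mul_self_le_smul (he : IsStarProjection e) (hxe : x * e = x) (hx : ‖x‖ ≤ c) :
    star x * x ≤ c ^ 2 • e := by
  have hle : star x * x ≤ c ^ 2 • (1 : A) := by
    rw [← Algebra.algebraMap_eq_smul_one]
    exact CStarAlgebra.star_mul_le_algebraMap_norm_sq.trans
      (algebraMap_mono A (pow_le_pow_left₀ (norm_nonneg x) hx 2))
  calc star x * x = e * (star x * x) * e := by
        nth_rw 1 2 [← hxe]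
        rw [star_mul, he.isSelfAdjoint.star_eq]
        simp only [mul_assoc]
    _ ≤ e * (c ^ 2 • (1 : A)) * e := he.isSelfAdjoint.conjugate_le_conjugate hle
    _ = c ^ 2 • e := by
        rw [mul_smul_comm, mul_one, smul_mul_assoc, he.isIdempotentElem]

theorem norm_add_le_of_blocks (he : IsStarProjection e) (hf : IsStarProjection f)
    (hef : e * f = 0) (hex : e * x = x) (hxe : x * e = x) (hfy : f * y = y) (hyf : y * f = y)
    (hx : ‖x‖ ≤ c) (hy : ‖y‖ ≤ c) : ‖x + y‖ ≤ c := by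
  have hxy : star x * y = 0 := by
    rw [← hex, ← hfy, star_mul, he.isSelfAdjoint.star_eq, mul_assoc, ← mul_assoc e, hef,
      zero_mul, mul_zero]
  have hyx : star y * x = 0 := by simpa using congr(star $hxy)
  have hle : star (x + y) * (x + y) ≤ algebraMap ℝ A (c ^ 2) :=
    calc star (x + y) * (x + y) = star x * x + star y * y := by
          rw [star_add, add_mul, mul_add, mul_add, hxy, hyx, add_zero, zero_add]
      _ ≤ c ^ 2 • e + c ^ 2 • f :=
          add_le_add (star_mul_self_le_smul he hxe hx) (star_mul_self_le_smul hf hyf hy)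
      _ = c ^ 2 • (e + f) := (smul_add _ _ _).symm
      _ ≤ c ^ 2 • (1 : A) := smul_le_smul_of_nonneg_left (he.add hf hef).le_one (sq_nonneg c)
      _ = algebraMap ℝ A (c ^ 2) := (Algebra.algebraMap_eq_smul_one _).symm
  refine abs_le_of_sq_le_sq' ?_ ((norm_nonneg x).trans hx) |>.2
  rw [sq, ← CStarRing.norm_star_mul_self]
  exact (CStarAlgebra.norm_le_iff_le_algebraMap _ (sq_nonneg c) (star_mul_self_nonneg _)).2 hle

end BlockNorm

section Displacement

variable {H : Type*} [NormedAddCommGroup H] [InnerProductSpace ℂ H] [CompleteSpace H]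
  {M W : VonNeumannAlgebra H} {τ : (H →L[ℂ] H) → ENNReal} {ι : Type*} {α : ι → H →L[ℂ] H}
  {e f p q v w : H →L[ℂ] H} {ε : ℝ}

/-- `v` displaces `e * p` off `q` inside the corner of `e`: it is a partial isometry of that corner
which is isometric on the range of `e * p`, has range orthogonal to `q`, and commutes with the
family `α` up to `ε`. -/
structure IsDisplacement (α : ι → H →L[ℂ] H) (ε : ℝ) (p q e v : H →L[ℂ] H) : Prop where
  isPartialIsometry : IsPartialIsometry v
  mul_left : e * v = v
  mul_right : v * e = v
  mul_eq_zero : q * v = 0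
  star_mul_self_mul : star v * v * p = e * p
  commutator_le : ∀ j, ‖v * α j - α j * v‖ ≤ ε

namespace IsDisplacement

theorem commutator_mul_left (hv : IsDisplacement α ε p q e v) {j : ι} (hα : Commute e (α j)) :
    e * (v * α j - α j * v) = v * α j - α j * v := by
  rw [mul_sub, ← mul_assoc, hv.mul_left, hα.left_comm, hv.mul_left]

theorem commutator_mul_right (hv : IsDisplacement α ε p q e v) {j : ι} (hα : Commute e (α j)) :
    (v * α j - α j * v) * e = v * α j - α j * v := by
  rw [sub_mul, mul_assoc, mul_assoc, hv.mul_right, ← hα.eq, ← mul_assoc, hv.mul_right]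

theorem add (hv : IsDisplacement α ε p q e v) (hw : IsDisplacement α ε p q f w)
    (he : IsStarProjection e) (hf : IsStarProjection f) (hef : e * f = 0)
    (heα : ∀ j, Commute e (α j)) (hfα : ∀ j, Commute f (α j)) :
    IsDisplacement α ε p q (e + f) (v + w) := by
  have hfe : f * e = 0 := by
    simpa [he.isSelfAdjoint.star_eq, hf.isSelfAdjoint.star_eq] using congr(star $hef)
  have hfv : f * v = 0 := by rw [← hv.mul_left, ← mul_assoc, hfe, zero_mul]
  have hew : e * w = 0 := by rw [← hw.mul_left, ← mul_assoc, hef, zero_mul]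
  have hvf : v * f = 0 := by rw [← hv.mul_right, mul_assoc, hef, mul_zero]
  have hwe : w * e = 0 := by rw [← hw.mul_right, mul_assoc, hfe, mul_zero]
  have hsvw : star v * w = 0 := by
    rw [← hv.mul_left, star_mul, he.isSelfAdjoint.star_eq, mul_assoc, hew, mul_zero]
  have hvsw : v * star w = 0 := by
    rw [← hw.mul_right, star_mul, hf.isSelfAdjoint.star_eq, ← mul_assoc, hvf, zero_mul]
  have hinit : star (v + w) * (v + w) = star v * v + star w * w := by
    have hswv : star w * v = 0 := by simpa using congr(star $hsvw)
    rw [star_add, add_mul, mul_add, mul_add, hsvw, hswv, add_zero, zero_add]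
  refine ⟨?_, ?_, ?_, ?_, ?_, fun j => ?_⟩
  · rw [IsPartialIsometry, hinit]
    refine hv.isPartialIsometry.add hw.isPartialIsometry ?_
    rw [mul_assoc, ← mul_assoc v, hvsw, zero_mul, mul_zero]
  · rw [add_mul, mul_add, mul_add, hv.mul_left, hw.mul_left, hfv, hew, add_zero, zero_add]
  · rw [mul_add, add_mul, add_mul, hv.mul_right, hw.mul_right, hvf, hwe, add_zero, zero_add]
  · rw [mul_add, hv.mul_eq_zero, hw.mul_eq_zero, add_zero]
  · rw [hinit, add_mul, add_mul, hv.star_mul_self_mul, hw.star_mul_self_mul]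
  · rw [add_mul, mul_add, add_sub_add_comm]
    exact norm_add_le_of_blocks he hf hef (hv.commutator_mul_left (heα j))
      (hv.commutator_mul_right (heα j)) (hw.commutator_mul_left (hfα j))
      (hw.commutator_mul_right (hfα j)) (hv.commutator_le j) (hw.commutator_le j)

end IsDisplacement

theorem norm_commutator_le_of_norm_sub_smul_le {a : H →L[ℂ] H} {t δ : ℝ}
    (ha : ‖(a - t • (1 : H →L[ℂ] H)) * e‖ ≤ δ) (hea : Commute e a) (hv : ‖v‖ ≤ 1)
    (hev : e * v = v) (hve : v * e = v) : ‖v * a - a * v‖ ≤ 2 * δ := by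
  have hright : v * ((a - t • (1 : H →L[ℂ] H)) * e) = v * a - t • v := by
    rw [sub_mul, ← hea.eq, mul_sub, ← mul_assoc, hve, smul_one_mul, mul_smul_comm, hve]
  have hleft : (a - t • (1 : H →L[ℂ] H)) * e * v = a * v - t • v := by
    rw [mul_assoc, hev, sub_mul, smul_one_mul]
  rw [← sub_sub_sub_cancel_right (v * a) (a * v) (t • v), ← hright, ← hleft, two_mul]
  refine (norm_sub_le _ _).trans (add_le_add ?_ ?_)
  · exact (norm_mul_le _ _).trans ((mul_le_of_le_one_left (norm_nonneg _) hv).trans ha)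
  · exact (norm_mul_le _ _).trans ((mul_le_of_le_one_right (norm_nonneg _) hv).trans ha)

theorem IsFNSTrace.exists_isDisplacement_of_isNearlyScalarOn (hτ : IsFNSTrace M τ) (hWM : W ≤ M)
    (hZ : centerSet M ⊆ W) (hW : ∀ x ∈ W, IsTauFiniteProjection M τ x → x = 0)
    (heW : e ∈ W) (he : IsStarProjection e) (heα : ∀ j, Commute e (α j))
    (hsmall : ∀ j, IsNearlyScalarOn (α j) (ε / 2) e) (hp : IsTauFiniteProjection M τ p)
    (hq : IsTauFiniteProjection M τ q) : ∃ v ∈ M, IsDisplacement α ε p q e v := by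
  obtain ⟨f, hf, hfep, hfmin⟩ := hτ.exists_isTauFiniteProjection_mul_eq (mul_mem (hWM heW) hp.1) hp
    (by rw [mul_assoc, hp.isStarProjection.isIdempotentElem])
  have hef : e * f = f := hfmin e (by rw [← mul_assoc, he.isIdempotentElem])
  have hfe : f * e = f := by
    simpa [he.isSelfAdjoint.star_eq, hf.isStarProjection.isSelfAdjoint.star_eq]
      using congr(star $hef)
  obtain ⟨v, hvM, hvf, hev, hqv⟩ := hτ.exists_equivalent_orthogonal hWM hZ hW heW he hf hef hq
  have hv : IsPartialIsometry v := by
    rw [IsPartialIsometry, hvf]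
    exact hf.isStarProjection
  have hve : v * e = v := by rw [← hv.mul_star_mul_self, hvf, mul_assoc, hfe]
  refine ⟨v, hvM, hv, hev, hve, hqv, by rw [hvf, ← hfep, ← mul_assoc, hfe], fun j => ?_⟩
  obtain ⟨t, ht⟩ := hsmall j
  refine (norm_commutator_le_of_norm_sub_smul_le ht (heα j) hv.norm_le_one hev hve).trans_eq ?_
  ring

theorem IsFNSTrace.exists_isDisplacement_one [Finite ι] (hτ : IsFNSTrace M τ) (hWM : W ≤ M)
    (hZ : centerSet M ⊆ W) (hW : ∀ x ∈ W, IsTauFiniteProjection M τ x → x = 0)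
    (hWcomm : ∀ x ∈ W, ∀ y ∈ W, Commute x y) (hαW : ∀ j, α j ∈ W)
    (hα : ∀ j, IsSelfAdjoint (α j)) (hp : IsTauFiniteProjection M τ p)
    (hq : IsTauFiniteProjection M τ q) (hε : 0 < ε) : ∃ v ∈ M, IsDisplacement α ε p q 1 v := by
  refine projection_induction (C := fun e => ∃ v ∈ M, IsDisplacement α ε p q e v) (half_pos hε)
    hWcomm hαW hα ?_ ?_
  · rintro e heW f hfW he hf hef ⟨v, hvM, hv⟩ ⟨w, hwM, hw⟩
    exact ⟨v + w, add_mem hvM hwM, hv.add hw he hf hef (fun j => hWcomm e heW _ (hαW j))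
      fun j => hWcomm f hfW _ (hαW j)⟩
  · exact fun e heW he hsmall => hτ.exists_isDisplacement_of_isNearlyScalarOn hWM hZ hW heW he
      (fun j => hWcomm e heW _ (hαW j)) hsmall hp hq

end Displacement

section Sequence

variable {H : Type*} [NormedAddCommGroup H] [InnerProductSpace ℂ H] [CompleteSpace H]
  {M : VonNeumannAlgebra H} {τ : (H →L[ℂ] H) → ENNReal} {ι : Type*} {α : ι → H →L[ℂ] H}
  {p q v : H →L[ℂ] H} {ε : ℝ}

theorem IsDisplacement.norm_commutator_mul_le (hv : IsDisplacement α ε p q 1 v)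
    (hp : IsStarProjection p) (j : ι) :
    ‖v * p * α j - α j * (v * p)‖ ≤ ε + ‖p * α j - α j * p‖ := by
  have hleibniz : v * p * α j - α j * (v * p) =
      (v * α j - α j * v) * p + v * (p * α j - α j * p) := by
    noncomm_ring
  rw [hleibniz]
  refine (norm_add_le _ _).trans (add_le_add ?_ ?_)
  · exact (norm_mul_le _ _).trans
      ((mul_le_of_le_one_right (norm_nonneg _) hp.norm_le).trans (hv.commutator_le j))
  · exact (norm_mul_le _ _).trans
      (mul_le_of_le_one_left (norm_nonneg _) hv.isPartialIsometry.norm_le_one)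

theorem IsDisplacement.star_mul_mul (hv : IsDisplacement α ε p q 1 v) (hp : IsStarProjection p) :
    star (v * p) * (v * p) = p := by
  rw [star_mul, hp.isSelfAdjoint.star_eq, mul_assoc, ← mul_assoc (star v), hv.star_mul_self_mul,
    one_mul, hp.isIdempotentElem]

theorem star_mul_eq_zero_of_lt {Q w : ℕ → H →L[ℂ] H} (hQ : ∀ k, IsSelfAdjoint (Q k))
    (hQw : ∀ k, Q k * w k = 0) (hQ_succ : ∀ k, Q (k + 1) = Q k + w k * star (w k))
    (hw : ∀ k, IsPartialIsometry (w k)) {l k : ℕ} (hlk : l < k) : star (w l) * w k = 0 := by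
  have hwQ (k : ℕ) : star (w k) * Q k = 0 := by
    simpa [(hQ k).star_eq] using congr(star $(hQw k))
  have absorbs : Q k * w l = w l := by
    induction k, hlk using Nat.le_induction with
    | base => rw [hQ_succ, add_mul, hQw, zero_add, (hw l).self_mul_star_mul]
    | succ k _ ih =>
      have hzero : star (w k) * w l = 0 := by rw [← ih, ← mul_assoc, hwQ, zero_mul]
      rw [hQ_succ, add_mul, ih, mul_assoc, hzero, mul_zero, add_zero]
  rw [← absorbs, star_mul, (hQ k).star_eq, mul_assoc, hQw, mul_zero]

theorem IsFNSTrace.exists_orthogonal_sequence (hτ : IsFNSTrace M τ)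
    {p : ℕ → H →L[ℂ] H} (hp : ∀ k, IsTauFiniteProjection M τ (p k))
    {R : ℕ → (H →L[ℂ] H) → Prop}
    (hR : ∀ k q, IsTauFiniteProjection M τ q → ∃ w ∈ M, star w * w = p k ∧ q * w = 0 ∧ R k w) :
    ∃ w : ℕ → H →L[ℂ] H, (∀ k, w k ∈ M) ∧
      (∀ l k, star (w l) * w k = if l = k then p k else 0) ∧ ∀ k, R k (w k) := by
  have hstep (k : ℕ) (q : {q // IsTauFiniteProjection M τ q}) :
      ∃ w ∈ M, star w * w = p k ∧ q * w = 0 ∧ R k w := hR k q q.2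
  choose v hvM hvp hqv hvR using hstep
  have hv (k q) : IsPartialIsometry (v k q) := by
    rw [IsPartialIsometry, hvp]
    exact (hp k).isStarProjection
  have enlarge (k q) : IsTauFiniteProjection M τ (q + v k q * star (v k q)) :=
    hτ.isTauFiniteProjection_add q.2 (hτ.isTauFiniteProjection_mul_star (hv k q) (hvM k q)
      (hp k) (by rw [← hvp k q, (hv k q).mul_star_mul_self]))
      (by rw [← mul_assoc, hqv, zero_mul])
  obtain ⟨Q, hQ⟩ : ∃ Q : ℕ → {q // IsTauFiniteProjection M τ q},
      ∀ k, (Q (k + 1) : H →L[ℂ] H) = Q k + v k (Q k) * star (v k (Q k)) :=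
    ⟨Nat.rec ⟨0, hτ.isTauFiniteProjection_zero⟩ fun k q => ⟨_, enlarge k q⟩, fun _ => rfl⟩
  have orthogonal {l k : ℕ} (hlk : l < k) : star (v l (Q l)) * v k (Q k) = 0 :=
    star_mul_eq_zero_of_lt (fun k => (Q k).2.isStarProjection.isSelfAdjoint)
      (fun k => hqv k (Q k)) hQ (fun k => hv k (Q k)) hlk
  refine ⟨fun k => v k (Q k), fun k => hvM _ _, fun l k => ?_, fun k => hvR _ _⟩
  obtain hlk | rfl | hkl := lt_trichotomy l k
  · rw [if_neg hlk.ne, orthogonal hlk]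
  · rw [if_pos rfl, hvp]
  · rw [if_neg hkl.ne']
    simpa using congr(star $(orthogonal hkl))

end Sequence

theorem commNorm_le_add_commNorm {H : Type*} [NormedAddCommGroup H] [InnerProductSpace ℂ H]
    {n : ℕ} (hn : 0 < n) {α : Fin n → H →L[ℂ] H} {p w : H →L[ℂ] H} {ε : ℝ}
    (h : ∀ j, ‖w * α j - α j * w‖ ≤ ε + ‖p * α j - α j * p‖) :
    commNorm α w ≤ ε + commNorm α p := by
  have : Nonempty (Fin n) := ⟨⟨0, hn⟩⟩
  have le_commNorm (j : Fin n) : ‖p * α j - α j * p‖ ≤ commNorm α p :=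
    le_ciSup (f := fun j => ‖p * α j - α j * p‖) (Set.finite_range _).bddAbove j
  exact ciSup_le fun j => (h j).trans (add_le_add_right (le_commNorm j) ε)

end VNA

open VNA in
theorem statement_18_general {H ι : Type*} [NormedAddCommGroup H] [InnerProductSpace ℂ H]
    [CompleteSpace H] [Finite ι] (M : VonNeumannAlgebra H) (τ : (H →L[ℂ] H) → ENNReal)
    (hτ : IsFNSTrace M τ) (α : ι → H →L[ℂ] H) (hαM : ∀ j, α j ∈ M)
    (hα : ∀ j, IsSelfAdjoint (α j)) (hcomm : ∀ i j, Commute (α i) (α j))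
    (htriv : ∀ x ∈ WZstar M (Set.range α), IsTauFiniteProjection M τ x → x = 0)
    (p : ℕ → H →L[ℂ] H) (hp : ∀ k, IsTauFiniteProjection M τ (p k))
    (ε : ℕ → ℝ) (hε : ∀ k, 0 < ε k) :
    ∃ w : ℕ → H →L[ℂ] H, (∀ k, w k ∈ M) ∧
      (∀ l k, star (w l) * w k = if l = k then p k else 0) ∧
      ∀ k j, ‖w k * α j - α j * w k‖ ≤ ε k + ‖p k * α j - α j * p k‖ := by
  have hrange : Set.range α ⊆ M := Set.range_subset_iff.2 hαM
  obtain ⟨W, hW⟩ := exists_coe_eq_WZstar (M := M) (S := Set.range α)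
    (Set.forall_mem_range.2 fun j => ⟨j, (hα j).symm⟩)
  have mem_iff {x} : x ∈ W ↔ x ∈ WZstar M (Set.range α) := by rw [← hW]; rfl
  have hgen : Set.range α ∪ centerSet M ⊆ W := hW ▸ subset_WZstar
  have hWcomm : ∀ x ∈ W, ∀ y ∈ W, Commute x y := fun x hx y hy =>
    WZstar_commute hrange (by rintro _ ⟨i, rfl⟩ _ ⟨j, rfl⟩; exact hcomm i j)
      x (mem_iff.1 hx) y (mem_iff.1 hy)
  refine hτ.exists_orthogonal_sequence hp
    (R := fun k w => ∀ j, ‖w * α j - α j * w‖ ≤ ε k + ‖p k * α j - α j * p k‖) fun k q hq => ?_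
  obtain ⟨v, hvM, hv⟩ := hτ.exists_isDisplacement_one (W := W)
    (fun x hx => WZstar_subset hrange (mem_iff.1 hx)) (fun z hz => hgen (.inr hz))
    (fun x hx => htriv x (mem_iff.1 hx)) hWcomm (fun j => hgen (.inl ⟨j, rfl⟩)) hα (hp k) hq (hε k)
  have hpk := (hp k).isStarProjection
  exact ⟨v * p k, mul_mem hvM (hp k).1, hv.star_mul_mul hpk,
    by rw [← mul_assoc, hv.mul_eq_zero, zero_mul], hv.norm_commutator_mul_le hpk⟩

open VNA in
/-- Given τ-finite projections `(p_k)` and positive `(ε_k)`, there are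
partial isometries `(w_k)` with `w_l* w_k = δ_{l,k} p_k` and
`‖[w_k,α]‖ ≤ ε_k + ‖[p_k,α]‖`. -/
theorem statement_18 {H : Type*} [NormedAddCommGroup H] [InnerProductSpace ℂ H]
    [CompleteSpace H] (M : VonNeumannAlgebra H)
    (hM : ProperlyInfinite M) (hσ : SigmaFinite M)
    (τ : (H →L[ℂ] H) → ENNReal) (hτ : IsFNSTrace M τ)
    (n : ℕ) (hn : 0 < n) (α : Fin n → (H →L[ℂ] H))
    (hα : IsCommutingSelfAdjointTuple M α)
    (htriv : ∀ x ∈ WZstar M (Set.range α), IsFiniteProjection M x → x = 0)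
    (p : ℕ → (H →L[ℂ] H)) (hp : ∀ k, IsTauFiniteProjection M τ (p k))
    (ε : ℕ → ℝ) (hε : ∀ k, 0 < ε k) :
    ∃ w : ℕ → (H →L[ℂ] H),
      (∀ k, w k ∈ M) ∧
      (∀ l k, star (w l) * w k = if l = k then p k else 0) ∧
      ∀ k, commNorm α (w k) ≤ ε k + commNorm α (p k) := by
  obtain ⟨w, hwM, hw, hcomm⟩ := statement_18_general M τ hτ α hα.1 hα.2.1 hα.2.2
    (fun x hx hxτ => htriv x hx (hτ.isFiniteProjection hxτ)) p hp ε hε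
  exact ⟨w, hwM, hw, fun k => commNorm_le_add_commNorm hn (hcomm k)⟩
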